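/- arXiv:2401.06646 — 2 statements merged into one kernel-verified Lean document; each statement's English description precedes it below -/
import Mathlib

section
/- Let β ∈ (1,2], let v ∈ ℝ^m with vᵢ ≥ 0 for all i, let W be an m×r real matrix with W_{ik} ≥ 0 for all i,k, and let h, h̃ ∈ ℝ^r with h_k > 0 and h̃_k > 0 for all k. Assume ṽᵢ := (Wh̃)ᵢ > 0 and (Wh)ᵢ > 0 for all i. Define d_β(x,y) = (x^β + (β−1)·y^β − β·x·y^{β−1}) / (β(β−1)) for x ≥ 0, y > 0, D_β(v,Wh) = ∑_{i=1}^m d_β(vᵢ, (Wh)ᵢ), and the Jensen majorizer g(h,h̃) = ∑_{i=1}^m ∑_{k=1}^r (W_{ik}·h̃_k/ṽᵢ)·d_β(vᵢ, ṽᵢ·h_k/h̃_k). Then g(h,h̃) ≥ D_β(v,Wh), and g(h̃,h̃) = D_β(v,Wh̃). -/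
/-!
The weights `W i k * h₀ k / (W *ᵥ h₀) i` of row `i` sum to one, and they average the points
`(W *ᵥ h₀) i * h k / h₀ k` to `(W *ᵥ h) i`, so Jensen's inequality in each row gives the
majorization; at `h = h₀` all these points coincide, hence tightness. For `1 < β ≤ 2` Jensen applies
to the β-divergence because its second argument `y` enters as a nonnegative multiple of the convex
`y ^ β` minus a nonnegative multiple of the concave `y ^ (β - 1)`.
-/

open scoped Matrix

/-- The scalar β-divergence `d_β(x, y)`, for `β ≠ 0, 1`: division by zero makes it `0` at these two
exponents, not the Itakura–Saito and Kullback–Leibler limits. -/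
noncomputable def betaDivergence (β x y : ℝ) : ℝ :=
  (x ^ β + (β - 1) * y ^ β - β * x * y ^ (β - 1)) / (β * (β - 1))

theorem betaDivergence_eq {β : ℝ} (hβ0 : β ≠ 0) (hβ1 : β ≠ 1) (x y : ℝ) :
    betaDivergence β x y =
      β⁻¹ * y ^ β - x / (β - 1) * y ^ (β - 1) + x ^ β / (β * (β - 1)) := by
  have hβ1' : β - 1 ≠ 0 := sub_ne_zero.mpr hβ1
  rw [betaDivergence]
  field_simp
  ring

theorem convexOn_betaDivergence {β x : ℝ} (hβ1 : 1 < β) (hβ2 : β ≤ 2) (hx : 0 ≤ x) :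
    ConvexOn ℝ (Set.Ici 0) (betaDivergence β x) := by
  have hβ0 : 0 < β := zero_lt_one.trans hβ1
  have hβ1' : 0 < β - 1 := sub_pos.mpr hβ1
  have hconvex : ConvexOn ℝ (Set.Ici 0) fun y : ℝ ↦ β⁻¹ * y ^ β :=
    (convexOn_rpow hβ1.le).smul (inv_nonneg.mpr hβ0.le)
  have hconcave : ConcaveOn ℝ (Set.Ici 0) fun y : ℝ ↦ x / (β - 1) * y ^ (β - 1) :=
    (Real.concaveOn_rpow hβ1'.le (by linarith)).smul (div_nonneg hx hβ1'.le)
  exact ((hconvex.sub hconcave).add_const (x ^ β / (β * (β - 1)))).congr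
    fun y _ ↦ (betaDivergence_eq hβ0.ne' hβ1.ne' x y).symm

section JensenMajorizer

variable {ι κ 𝕜 : Type*} [Fintype κ] [Field 𝕜] {W : Matrix ι κ 𝕜} {h h₀ : κ → 𝕜}

theorem sum_mul_div_mulVec_eq_one {i : ι} (hi : (W *ᵥ h₀) i ≠ 0) :
    ∑ k, W i k * h₀ k / (W *ᵥ h₀) i = 1 := by
  rw [← Finset.sum_div]
  exact div_self hi

theorem sum_mul_div_mulVec_mul_eq_mulVec {i : ι} (hi : (W *ᵥ h₀) i ≠ 0) (h₀_ne : ∀ k, h₀ k ≠ 0) :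
    ∑ k, W i k * h₀ k / (W *ᵥ h₀) i * ((W *ᵥ h₀) i * h k / h₀ k) = (W *ᵥ h) i := by
  refine Finset.sum_congr rfl fun k _ ↦ ?_
  have hk := h₀_ne k
  field_simp

variable [Fintype ι]

/-- The Jensen majorizer `g(h, h₀)` of `h ↦ ∑ i, φ i ((W *ᵥ h) i)` anchored at `h₀`. A divergence
`d` and data `v` enter through `φ i = d (v i)`. -/
def jensenMajorizer (φ : ι → 𝕜 → 𝕜) (W : Matrix ι κ 𝕜) (h h₀ : κ → 𝕜) : 𝕜 :=
  ∑ i, ∑ k, W i k * h₀ k / (W *ᵥ h₀) i * φ i ((W *ᵥ h₀) i * h k / h₀ k)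

theorem jensenMajorizer_self (φ : ι → 𝕜 → 𝕜) (h₀_ne : ∀ k, h₀ k ≠ 0)
    (hWh₀ : ∀ i, (W *ᵥ h₀) i ≠ 0) :
    jensenMajorizer φ W h₀ h₀ = ∑ i, φ i ((W *ᵥ h₀) i) := by
  refine Finset.sum_congr rfl fun i _ ↦ ?_
  simp only [mul_div_cancel_right₀ _ (h₀_ne _)]
  rw [← Finset.sum_mul, sum_mul_div_mulVec_eq_one (hWh₀ i), one_mul]

theorem sum_mulVec_le_jensenMajorizer [LinearOrder 𝕜] [IsStrictOrderedRing 𝕜]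
    {s : ι → Set 𝕜} {φ : ι → 𝕜 → 𝕜} (hφ : ∀ i, ConvexOn 𝕜 (s i) (φ i)) (hW : ∀ i k, 0 ≤ W i k)
    (h₀_pos : ∀ k, 0 < h₀ k) (hWh₀ : ∀ i, 0 < (W *ᵥ h₀) i)
    (hs : ∀ i k, (W *ᵥ h₀) i * h k / h₀ k ∈ s i) :
    ∑ i, φ i ((W *ᵥ h) i) ≤ jensenMajorizer φ W h h₀ := by
  refine Finset.sum_le_sum fun i _ ↦ ?_
  have weight_nonneg (k : κ) : 0 ≤ W i k * h₀ k / (W *ᵥ h₀) i :=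
    div_nonneg (mul_nonneg (hW i k) (h₀_pos k).le) (hWh₀ i).le
  rw [← sum_mul_div_mulVec_mul_eq_mulVec (hWh₀ i).ne' fun k ↦ (h₀_pos k).ne']
  exact (hφ i).map_sum_le (fun k _ ↦ weight_nonneg k) (sum_mul_div_mulVec_eq_one (hWh₀ i).ne')
    fun k _ ↦ hs i k

end JensenMajorizer

theorem beta_jensen_majorizer_general {ι κ : Type*} [Fintype ι] [Fintype κ] {β : ℝ}
    (hβ1 : 1 < β) (hβ2 : β ≤ 2) {v : ι → ℝ} (hv : ∀ i, 0 ≤ v i)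
    {W : Matrix ι κ ℝ} (hW : ∀ i k, 0 ≤ W i k) {h h₀ : κ → ℝ} (h_nonneg : ∀ k, 0 ≤ h k)
    (h₀_pos : ∀ k, 0 < h₀ k) (hWh₀ : ∀ i, 0 < (W *ᵥ h₀) i) :
    ∑ i, betaDivergence β (v i) ((W *ᵥ h) i) ≤
        jensenMajorizer (fun i ↦ betaDivergence β (v i)) W h h₀ ∧
      jensenMajorizer (fun i ↦ betaDivergence β (v i)) W h₀ h₀ =
        ∑ i, betaDivergence β (v i) ((W *ᵥ h₀) i) :=
  ⟨sum_mulVec_le_jensenMajorizer (fun i ↦ convexOn_betaDivergence hβ1 hβ2 (hv i)) hW h₀_pos hWh₀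
      fun i k ↦ div_nonneg (mul_nonneg (hWh₀ i).le (h_nonneg k)) (h₀_pos k).le,
    jensenMajorizer_self _ (fun k ↦ (h₀_pos k).ne') fun i ↦ (hWh₀ i).ne'⟩

open Finset in
/-- The Jensen majorizer for β-NMF, β ∈ (1,2], majorizes the β-divergence and is
tight at the anchor point (Févotte–Idier majorizer). -/
theorem beta_jensen_majorizer
    {m r : ℕ} (β : ℝ) (hβ1 : 1 < β) (hβ2 : β ≤ 2)
    (v : Fin m → ℝ) (hv : ∀ i, 0 ≤ v i)
    (W : Matrix (Fin m) (Fin r) ℝ) (hW : ∀ i k, 0 ≤ W i k)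
    (h htilde : Fin r → ℝ) (hh : ∀ k, 0 < h k) (hhtilde : ∀ k, 0 < htilde k)
    (hvt : ∀ i, 0 < W.mulVec htilde i) (hvh : ∀ i, 0 < W.mulVec h i)
    (dβ : ℝ → ℝ → ℝ)
    (hdβ : ∀ x y, dβ x y =
      (x ^ β + (β - 1) * y ^ β - β * x * y ^ (β - 1)) / (β * (β - 1))) :
    (∑ i, dβ (v i) (W.mulVec h i) ≤
        ∑ i, ∑ k, (W i k * htilde k / W.mulVec htilde i) *
          dβ (v i) (W.mulVec htilde i * h k / htilde k)) ∧
    (∑ i, ∑ k, (W i k * htilde k / W.mulVec htilde i) *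
          dβ (v i) (W.mulVec htilde i * htilde k / htilde k)
        = ∑ i, dβ (v i) (W.mulVec htilde i)) := by
  obtain rfl : dβ = betaDivergence β := funext₂ hdβ
  exact beta_jensen_majorizer_general hβ1 hβ2 hv hW (fun k ↦ (hh k).le) hhtilde hvt
end

section
/- Let ε > 0, let v ∈ ℝ^m with vᵢ > 0, let W be an m×r real matrix with W_{ik} ≥ 0 and ∑_{i=1}^m W_{ik} > 0 for the fixed index k, and let h̃ ∈ ℝ^r with h̃_k > 0 and ṽᵢ := (Wh̃)ᵢ > 0 for all i. Define φ(x) = ∑_{i=1}^m (W_{ik}·h̃_k/ṽᵢ)·d₁(vᵢ, ṽᵢ·x/h̃_k) for x > 0, where d₁(a,b) = a·log(a/b) − a + b. Then x* = max( ε , h̃_k · (∑_{i=1}^m W_{ik}·vᵢ/ṽᵢ) / (∑_{i=1}^m W_{ik}) ) is the unique minimizer of φ over the set {x ∈ ℝ : x ≥ ε}. -/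
/-!
Along the ray `x ↦ c * x`, the divergence `d₁(a, c * x)` is `d₁(a, c) + c * (x - 1) - a * log x`.
With `c = u i / t` it follows that, up to an additive constant, the majorizer is `b * x - a * log x`
with `b = ∑ i, w i` and `a = t * ∑ i, w i * v i / u i`. For `s = max ε (a / b)`, complementary
slackness gives `a * log (x / s) ≤ b * s * log (x / s)` for all `x ≥ ε`, and `log y < y - 1` for
positive `y ≠ 1` bounds the right-hand side strictly by `b * (x - s)` unless `x = s`.
-/

open Real

theorem mul_sub_mul_log_lt_of_ne_max {a b ε x : ℝ} (hb : 0 < b) (hε : 0 < ε) (hx : ε ≤ x)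
    (hne : x ≠ max ε (a / b)) :
    b * max ε (a / b) - a * log (max ε (a / b)) < b * x - a * log x := by
  set s := max ε (a / b)
  have hs0 : 0 < s := lt_max_of_lt_left hε
  have hx0 : 0 < x := hε.trans_le hx
  have slackness : a * log (x / s) ≤ b * s * log (x / s) := by
    rcases le_total (a / b) ε with h | h
    · have hsε : s = ε := max_eq_left h
      have hlog : 0 ≤ log (x / s) := log_nonneg ((one_le_div hs0).2 (hsε ▸ hx))
      exact mul_le_mul_of_nonneg_right ((div_le_iff₀' hb).1 (le_max_right _ _)) hlog
    · rw [show s = a / b from max_eq_right h, mul_div_cancel₀ a hb.ne']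
  have tangent : log (x / s) < x / s - 1 :=
    log_lt_sub_one_of_pos (div_pos hx0 hs0) fun h => hne ((div_eq_one_iff_eq hs0.ne').1 h)
  have : a * (log x - log s) < b * x - b * s := calc
    a * (log x - log s) = a * log (x / s) := by rw [log_div hx0.ne' hs0.ne']
    _ ≤ b * s * log (x / s) := slackness
    _ < b * s * (x / s - 1) := mul_lt_mul_of_pos_left tangent (mul_pos hb hs0)
    _ = b * x - b * s := by field_simp
  linarith

/-- The Kullback–Leibler divergence `d₁` between two scalars. For `a = 0` the logarithmic term
vanishes, in agreement with the convention `0 * log 0 = 0`. -/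
noncomputable def scalarKL (a b : ℝ) : ℝ :=
  a * log (a / b) - a + b

theorem scalarKL_mul_right (a : ℝ) {c x : ℝ} (hc : c ≠ 0) (hx : x ≠ 0) :
    scalarKL a (c * x) = scalarKL a c + c * (x - 1) - a * log x := by
  rcases eq_or_ne a 0 with rfl | ha
  · simp only [scalarKL]
    ring
  · have hlog : log (a / (c * x)) = log (a / c) - log x := by
      rw [← div_div, log_div (div_ne_zero ha hc) hx]
    rw [scalarKL, scalarKL, hlog]
    ring

section Majorizer

variable {ι : Type*} [Fintype ι]

/-- One coordinate of the Jensen majorizer, at a point `h̃`, of the Kullback–Leibler objective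
`h ↦ ∑ i, d₁(v i, (W h) i)`. Here `w` stands for the column of `W` belonging to the coordinate, `u`
for `W h̃`, and `t` for the value of the coordinate at `h̃`. -/
noncomputable def jensenKLMajorizer (w v u : ι → ℝ) (t x : ℝ) : ℝ :=
  ∑ i, w i * t / u i * scalarKL (v i) (u i * x / t)

theorem jensenKLMajorizer_eq_linear_sub_log (w v : ι → ℝ) {u : ι → ℝ} {t x : ℝ}
    (hu : ∀ i, u i ≠ 0) (ht : t ≠ 0) (hx : x ≠ 0) :
    jensenKLMajorizer w v u t x =
      jensenKLMajorizer w v u t 1 + (∑ i, w i) * (x - 1) -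
        t * (∑ i, w i * v i / u i) * log x := by
  simp only [jensenKLMajorizer, Finset.mul_sum, Finset.sum_mul, ← Finset.sum_add_distrib,
    ← Finset.sum_sub_distrib]
  refine Finset.sum_congr rfl fun i _ => ?_
  have hui := hu i
  rw [mul_one, mul_div_right_comm (u i) x t, scalarKL_mul_right _ (div_ne_zero hui ht) hx]
  field_simp

theorem jensenKLMajorizer_lt_of_ne_max {w v u : ι → ℝ} {ε t x : ℝ} (hε : 0 < ε)
    (hw : 0 < ∑ i, w i) (hu : ∀ i, u i ≠ 0) (ht : t ≠ 0) (hx : ε ≤ x)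
    (hne : x ≠ max ε (t * (∑ i, w i * v i / u i) / ∑ i, w i)) :
    jensenKLMajorizer w v u t (max ε (t * (∑ i, w i * v i / u i) / ∑ i, w i)) <
      jensenKLMajorizer w v u t x := by
  rw [jensenKLMajorizer_eq_linear_sub_log w v hu ht (lt_max_of_lt_left hε).ne',
    jensenKLMajorizer_eq_linear_sub_log w v hu ht (hε.trans_le hx).ne']
  linarith [mul_sub_mul_log_lt_of_ne_max hw hε hx hne]

theorem mu_unique_minimizer_of_kl_majorizer_general {w v u : ι → ℝ} {ε t xstar : ℝ}
    (hε : 0 < ε) (hw : 0 < ∑ i, w i) (hv : ∀ i, 0 ≤ v i) (hu : ∀ i, 0 < u i) (ht : 0 < t)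
    (hxstar : xstar = max ε (t * (∑ i, w i * v i / u i) / ∑ i, w i)) :
    ε ≤ xstar ∧
      (∀ x, ε ≤ x → jensenKLMajorizer w v u t xstar ≤ jensenKLMajorizer w v u t x) ∧
      ∀ x, ε ≤ x → (∀ y, ε ≤ y → jensenKLMajorizer w v u t x ≤ jensenKLMajorizer w v u t y) →
        x = xstar := by
  have hmem : ε ≤ xstar := hxstar ▸ le_max_left _ _
  have strict (x : ℝ) (hx : ε ≤ x) (hne : x ≠ xstar) :
      jensenKLMajorizer w v u t xstar < jensenKLMajorizer w v u t x := by
    subst hxstar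
    exact jensenKLMajorizer_lt_of_ne_max hε hw (fun i => (hu i).ne') ht.ne' hx hne
  refine ⟨hmem, fun x hx => ?_, fun x hx hmin => ?_⟩
  · rcases eq_or_ne x xstar with rfl | hne
    · exact le_rfl
    · exact (strict x hx hne).le
  · by_contra hne
    exact (strict x hx hne).not_ge (hmin xstar hmem)

end Majorizer

open Finset in
/-- The multiplicative update of Lee–Seung is the unique minimizer of the
coordinatewise Jensen KL majorizer over {x : x ≥ ε}. -/
theorem mu_unique_minimizer_of_kl_majorizer
    {m r : ℕ} (ε : ℝ) (hε : 0 < ε)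
    (v : Fin m → ℝ) (hv : ∀ i, 0 < v i)
    (W : Matrix (Fin m) (Fin r) ℝ) (hW : ∀ i k, 0 ≤ W i k)
    (k : Fin r) (hWk : 0 < ∑ i, W i k)
    (htilde : Fin r → ℝ) (hhtildek : 0 < htilde k)
    (hvt : ∀ i, 0 < W.mulVec htilde i)
    (d₁ : ℝ → ℝ → ℝ) (hd₁ : ∀ a b, d₁ a b = a * Real.log (a / b) - a + b)
    (φ : ℝ → ℝ)
    (hφ : ∀ x, φ x = ∑ i, (W i k * htilde k / W.mulVec htilde i) *
      d₁ (v i) (W.mulVec htilde i * x / htilde k))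
    (xstar : ℝ)
    (hxstar : xstar =
      max ε (htilde k * (∑ i, W i k * v i / W.mulVec htilde i) / ∑ i, W i k)) :
    xstar ∈ {x : ℝ | ε ≤ x} ∧ (∀ x ∈ {x : ℝ | ε ≤ x}, φ xstar ≤ φ x) ∧
      ∀ x ∈ {x : ℝ | ε ≤ x}, (∀ y ∈ {x : ℝ | ε ≤ x}, φ x ≤ φ y) → x = xstar := by
  obtain rfl : φ = jensenKLMajorizer (fun i => W i k) v (W.mulVec htilde) (htilde k) :=
    funext fun x => by simp only [hφ, hd₁, jensenKLMajorizer, scalarKL]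
  exact mu_unique_minimizer_of_kl_majorizer_general hε hWk (fun i => (hv i).le) hvt hhtildek hxstar
end
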